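/- Let M be a compact metric space, μ a finite Borel measure on M, A : M × M → ℝ continuous, I ⊆ ℝ closed, with A sectionally trivial on I (the map m ↦ s(m) = {a ∈ M : A(a,m) ∈ I} is locally constant on M). For continuous ψ, φ : B(A,I) → ℝ (with B(A,I) carrying the subspace topology from the product topology), define the generalized Ruelle operator (L_ψφ)(x) = ∫_{s(x 0)} e^{ψ(ax)} φ(ax) dμ(a) for x ∈ B(A,I). Then L_ψφ is a continuous function on B(A,I), and sup_{x ∈ B(A,I)} |L_ψφ(x)| ≤ μ(M) · e^{‖ψ‖_∞} · ‖φ‖_∞; hence φ ↦ L_ψφ is a bounded linear operator on C(B(A,I),ℝ) with the supremum norm. -/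

import Mathlib

open MeasureTheory
open scoped Classical

/-- The sequence `ax = (a, x 0, x 1, …)`. -/
def seqCons {M : Type*} (a : M) (x : ℕ → M) : ℕ → M
  | 0 => a
  | n + 1 => x n

/-- For `x ∈ B(A,I)` and `a ∈ s(x 0)`, the sequence `ax` as an element of `B(A,I)`. -/
def consMem {M : Type*} (A : M × M → ℝ) (I : Set ℝ)
    (x : {z : ℕ → M // ∀ k : ℕ, A (z k, z (k + 1)) ∈ I}) (a : M)
    (ha : A (a, x.1 0) ∈ I) : {z : ℕ → M // ∀ k : ℕ, A (z k, z (k + 1)) ∈ I} :=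
  ⟨seqCons a x.1, by
    intro k
    cases k with
    | zero => exact ha
    | succ n => exact x.2 n⟩

/-!
Extending `a ↦ f (ax)` by zero outside `s(x 0)` turns the integral over the moving domain `s(x 0)`
into an integral over all of `M`. For a fixed `a` the extended integrand is continuous at `x` as
soon as membership of `a` in `s(m)` does not change for `m` near `x 0`, and it is bounded by `‖f‖`.
Dominated convergence therefore makes `f ↦ ∫ f (ax) dμ(a)` an operator on bounded continuous
functions of norm at most `μ(M)`, and `L_ψ` is this operator composed with multiplication by `e^ψ`,
which has norm at most `e^‖ψ‖`.
-/

section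

open Topology BoundedContinuousFunction

variable {M E : Type*} {A : M × M → ℝ} {I : Set ℝ}

/-- The space `B(A,I)` of sequences all of whose transitions are allowed by `A` and `I`. -/
abbrev AdmissibleSeq (A : M × M → ℝ) (I : Set ℝ) : Type _ :=
  {z : ℕ → M // ∀ k : ℕ, A (z k, z (k + 1)) ∈ I}

/-- The section `s(m)`: the letters that may precede `m`. -/
def predecessors (A : M × M → ℝ) (I : Set ℝ) (m : M) : Set M :=
  {a | A (a, m) ∈ I}

/-- The function `a ↦ f (ax)` on `s(x 0)`, extended by zero to all of `M`. -/
noncomputable def consExtend [Zero E] (f : AdmissibleSeq A I → E) (x : AdmissibleSeq A I)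
    (a : M) : E :=
  if ha : A (a, x.1 0) ∈ I then f (consMem A I x a ha) else 0

/-- Sectional triviality up to null sets: for each `m`, almost every letter keeps its status as a
predecessor of `m` when `m` is perturbed, by an amount that may depend on the letter. Besides the
case of locally constant sections, this covers for instance `a ≥ m` on `[0, 1]` with Lebesgue
measure. -/
def AESectionallyTrivial [TopologicalSpace M] [MeasurableSpace M] (μ : Measure M)
    (A : M × M → ℝ) (I : Set ℝ) : Prop :=
  ∀ m, ∀ᵐ a ∂μ, ∀ᶠ m' in 𝓝 m, a ∈ predecessors A I m' ↔ a ∈ predecessors A I m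

theorem isClosed_predecessors [TopologicalSpace M] (hA : Continuous A) (hI : IsClosed I) (m : M) :
    IsClosed (predecessors A I m) :=
  hI.preimage (hA.comp (Continuous.prodMk_left m))

theorem isLocallyConstant_of_dist {X Y : Type*} [PseudoMetricSpace X] {f : X → Y}
    (h : ∀ x, ∃ ε > (0 : ℝ), ∀ y, dist x y < ε → f y = f x) : IsLocallyConstant f := by
  refine (IsLocallyConstant.iff_eventually_eq f).2 fun x => Metric.eventually_nhds_iff.2 ?_
  simpa only [dist_comm x] using h x

theorem aeSectionallyTrivial_of_isLocallyConstant [TopologicalSpace M] [MeasurableSpace M]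
    (μ : Measure M) (h : IsLocallyConstant (predecessors A I)) : AESectionallyTrivial μ A I :=
  fun m => .of_forall fun a => (h.eventually_eq m).mono fun _ hm' => by rw [hm']

theorem consExtend_of_mem [Zero E] (f : AdmissibleSeq A I → E) {x : AdmissibleSeq A I} {a : M}
    (ha : a ∈ predecessors A I (x.1 0)) : consExtend f x a = f (consMem A I x a ha) :=
  dif_pos ha

theorem consExtend_of_notMem [Zero E] (f : AdmissibleSeq A I → E) {x : AdmissibleSeq A I} {a : M}
    (ha : a ∉ predecessors A I (x.1 0)) : consExtend f x a = 0 :=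
  dif_neg ha

theorem consExtend_add [AddZeroClass E] (f g : AdmissibleSeq A I → E) (x : AdmissibleSeq A I)
    (a : M) : consExtend (f + g) x a = consExtend f x a + consExtend g x a := by
  by_cases ha : A (a, x.1 0) ∈ I <;> simp [consExtend, ha]

theorem consExtend_smul {R : Type*} [Zero E] [SMulZeroClass R E] (c : R)
    (f : AdmissibleSeq A I → E) (x : AdmissibleSeq A I) (a : M) :
    consExtend (c • f) x a = c • consExtend f x a := by
  by_cases ha : A (a, x.1 0) ∈ I <;> simp [consExtend, ha]

theorem setIntegral_consExtend [MeasurableSpace M] {μ : Measure M} [NormedAddCommGroup E]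
    [NormedSpace ℝ E] (f : AdmissibleSeq A I → E) (x : AdmissibleSeq A I) :
    ∫ a in predecessors A I (x.1 0), consExtend f x a ∂μ = ∫ a, consExtend f x a ∂μ :=
  setIntegral_eq_integral_of_forall_compl_eq_zero fun _ ha => consExtend_of_notMem f ha

theorem integral_consExtend_smul [MeasurableSpace M] {μ : Measure M} [NormedAddCommGroup E]
    [NormedSpace ℝ E] (c : ℝ) (f : AdmissibleSeq A I → E) (x : AdmissibleSeq A I) :
    ∫ a, consExtend (c • f) x a ∂μ = c • ∫ a, consExtend f x a ∂μ := by
  simp only [consExtend_smul, integral_smul]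

section Continuity

variable [TopologicalSpace M]

theorem continuous_consMem {Y : Type*} [TopologicalSpace Y] {x : Y → AdmissibleSeq A I} {a : Y → M}
    (hx : Continuous x) (ha : Continuous a) (h : ∀ y, a y ∈ predecessors A I ((x y).1 0)) :
    Continuous fun y => consMem A I (x y) (a y) (h y) := by
  refine Continuous.subtype_mk (continuous_pi fun n => ?_) _
  cases n with
  | zero => exact ha
  | succ n => exact (continuous_apply n).comp (continuous_subtype_val.comp hx)

theorem continuousOn_consExtend [Zero E] [TopologicalSpace E] {f : AdmissibleSeq A I → E}
    (hf : Continuous f) :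
    ContinuousOn (fun p : AdmissibleSeq A I × M => consExtend f p.1 p.2)
      {p | p.2 ∈ predecessors A I (p.1.1 0)} := by
  rw [continuousOn_iff_continuous_domRestrict]
  refine (hf.comp (continuous_consMem (continuous_fst.comp continuous_subtype_val)
    (continuous_snd.comp continuous_subtype_val) fun p => p.2)).congr fun p => ?_
  exact (consExtend_of_mem f p.2).symm

theorem continuousAt_consExtend [Zero E] [TopologicalSpace E] {f : AdmissibleSeq A I → E}
    (hf : Continuous f) {x : AdmissibleSeq A I} {a : M}
    (ha : ∀ᶠ m in 𝓝 (x.1 0), a ∈ predecessors A I m ↔ a ∈ predecessors A I (x.1 0)) :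
    ContinuousAt (fun y => consExtend f y a) x := by
  have hhead : ContinuousAt (fun y : AdmissibleSeq A I => y.1 0) x :=
    ((continuous_apply 0).comp continuous_subtype_val).continuousAt
  have hstable := hhead.eventually ha
  by_cases hx : a ∈ predecessors A I (x.1 0)
  · have hallowed : {y : AdmissibleSeq A I | a ∈ predecessors A I (y.1 0)} ∈ 𝓝 x :=
      hstable.mono fun _ hy => hy.2 hx
    exact ((continuousOn_consExtend hf).comp (Continuous.prodMk_left a).continuousOn
      fun _ hy => hy).continuousAt hallowed
  · refine continuousAt_const.congr (f := fun _ => (0 : E)) ?_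
    exact hstable.mono fun y hy => (consExtend_of_notMem f fun h => hx (hy.1 h)).symm

end Continuity

section Integral

variable [TopologicalSpace M] [NormedAddCommGroup E]

theorem norm_consExtend_le (f : AdmissibleSeq A I →ᵇ E) (x : AdmissibleSeq A I) (a : M) :
    ‖consExtend f x a‖ ≤ ‖f‖ := by
  by_cases ha : a ∈ predecessors A I (x.1 0)
  · simpa only [consExtend_of_mem f ha] using f.norm_coe_le_norm _
  · simp [consExtend_of_notMem f ha]

variable [MeasurableSpace M] {μ : Measure M}

theorem norm_integral_consExtend_le [NormedSpace ℝ E] [IsFiniteMeasure μ]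
    (f : AdmissibleSeq A I →ᵇ E) (x : AdmissibleSeq A I) :
    ‖∫ a, consExtend f x a ∂μ‖ ≤ μ.real Set.univ * ‖f‖ :=
  (norm_integral_le_of_norm_le_const (.of_forall (norm_consExtend_le f x))).trans_eq (mul_comm _ _)

variable [OpensMeasurableSpace M] [SecondCountableTopologyEither M E]

theorem aestronglyMeasurable_consExtend {f : AdmissibleSeq A I → E} (hf : Continuous f)
    {x : AdmissibleSeq A I} (hs : MeasurableSet (predecessors A I (x.1 0))) :
    AEStronglyMeasurable (consExtend f x) μ := by
  have hindicator : (predecessors A I (x.1 0)).indicator (consExtend f x) = consExtend f x :=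
    Set.indicator_eq_self.2 fun a ha => by_contra fun h => ha (consExtend_of_notMem f h)
  rw [← hindicator, aestronglyMeasurable_indicator_iff hs]
  refine ContinuousOn.aestronglyMeasurable ?_ hs
  exact (continuousOn_consExtend hf).comp (Continuous.prodMk_right x).continuousOn fun _ ha => ha

variable [IsFiniteMeasure μ]

theorem integrable_consExtend (f : AdmissibleSeq A I →ᵇ E) {x : AdmissibleSeq A I}
    (hs : MeasurableSet (predecessors A I (x.1 0))) : Integrable (consExtend f x) μ :=
  .of_bound (aestronglyMeasurable_consExtend f.continuous hs) ‖f‖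
    (.of_forall (norm_consExtend_le f x))

variable [NormedSpace ℝ E]

theorem integral_consExtend_add (f g : AdmissibleSeq A I →ᵇ E) {x : AdmissibleSeq A I}
    (hs : MeasurableSet (predecessors A I (x.1 0))) :
    ∫ a, consExtend (⇑f + ⇑g) x a ∂μ = ∫ a, consExtend f x a ∂μ + ∫ a, consExtend g x a ∂μ := by
  simp only [consExtend_add]
  exact integral_add (integrable_consExtend f hs) (integrable_consExtend g hs)

theorem continuous_integral_consExtend [FirstCountableTopology M]
    (hs : ∀ m, MeasurableSet (predecessors A I m)) (htriv : AESectionallyTrivial μ A I)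
    (f : AdmissibleSeq A I →ᵇ E) : Continuous fun x => ∫ a, consExtend f x a ∂μ := by
  have : FirstCountableTopology (AdmissibleSeq A I) :=
    Topology.IsInducing.subtypeVal.firstCountableTopology
  refine continuous_iff_continuousAt.2 fun x => continuousAt_of_dominated
    (.of_forall fun y => aestronglyMeasurable_consExtend f.continuous (hs (y.1 0)))
    (.of_forall fun y => .of_forall (norm_consExtend_le f y)) (integrable_const ‖f‖) ?_
  exact (htriv (x.1 0)).mono fun a ha => continuousAt_consExtend f.continuous ha

end Integral

/-- The weight `e^ψ` of a bounded continuous potential `ψ`. -/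
noncomputable def expWeight {X : Type*} [TopologicalSpace X] (ψ : X →ᵇ ℝ) : X →ᵇ ℝ :=
  ofNormedAddCommGroup (fun x => Real.exp (ψ x)) (Real.continuous_exp.comp ψ.continuous)
    (Real.exp ‖ψ‖) fun x => by simpa using ψ.apply_le_norm x

theorem norm_expWeight_le {X : Type*} [TopologicalSpace X] (ψ : X →ᵇ ℝ) :
    ‖expWeight ψ‖ ≤ Real.exp ‖ψ‖ :=
  norm_ofNormedAddCommGroup_le _ (Real.exp_nonneg _) _

section Operator

variable [TopologicalSpace M] [FirstCountableTopology M] [MeasurableSpace M]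
  [OpensMeasurableSpace M] {μ : Measure M} [IsFiniteMeasure μ]

/-- The operator `f ↦ (x ↦ ∫_{s(x 0)} f (ax) dμ(a))` on bounded continuous functions, i.e. the
generalized Ruelle operator with zero potential. -/
noncomputable def predecessorIntegral [NormedAddCommGroup E] [NormedSpace ℝ E]
    [SecondCountableTopologyEither M E] (hs : ∀ m, MeasurableSet (predecessors A I m))
    (htriv : AESectionallyTrivial μ A I) :
    (AdmissibleSeq A I →ᵇ E) →L[ℝ] (AdmissibleSeq A I →ᵇ E) :=
  LinearMap.mkContinuous
    { toFun := fun f => ofNormedAddCommGroup (fun x => ∫ a, consExtend f x a ∂μ)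
        (continuous_integral_consExtend hs htriv f) _ (norm_integral_consExtend_le f)
      map_add' := fun f g => ext fun x => integral_consExtend_add f g (hs (x.1 0))
      map_smul' := fun c f => ext fun x => integral_consExtend_smul c f x }
    (μ.real Set.univ)
    fun f => norm_ofNormedAddCommGroup_le _ (by positivity) (norm_integral_consExtend_le f)

theorem norm_predecessorIntegral_le [NormedAddCommGroup E] [NormedSpace ℝ E]
    [SecondCountableTopologyEither M E] (hs : ∀ m, MeasurableSet (predecessors A I m))
    (htriv : AESectionallyTrivial μ A I) :
    ‖predecessorIntegral (E := E) hs htriv‖ ≤ μ.real Set.univ :=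
  LinearMap.mkContinuous_norm_le _ (by positivity) _

/-- The generalized Ruelle operator `L_ψ` on bounded continuous functions. -/
noncomputable def ruelleOperator (hs : ∀ m, MeasurableSet (predecessors A I m))
    (htriv : AESectionallyTrivial μ A I) (ψ : AdmissibleSeq A I →ᵇ ℝ) :
    (AdmissibleSeq A I →ᵇ ℝ) →L[ℝ] (AdmissibleSeq A I →ᵇ ℝ) :=
  (predecessorIntegral hs htriv).comp (ContinuousLinearMap.mul ℝ _ (expWeight ψ))

theorem ruelleOperator_apply (hs : ∀ m, MeasurableSet (predecessors A I m))
    (htriv : AESectionallyTrivial μ A I) (ψ φ : AdmissibleSeq A I →ᵇ ℝ) (x : AdmissibleSeq A I) :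
    ruelleOperator hs htriv ψ φ x =
      ∫ a in predecessors A I (x.1 0), consExtend (fun z => Real.exp (ψ z) * φ z) x a ∂μ :=
  (setIntegral_consExtend _ x).symm

theorem norm_ruelleOperator_le (hs : ∀ m, MeasurableSet (predecessors A I m))
    (htriv : AESectionallyTrivial μ A I) (ψ : AdmissibleSeq A I →ᵇ ℝ) :
    ‖ruelleOperator hs htriv ψ‖ ≤ μ.real Set.univ * Real.exp ‖ψ‖ := by
  calc ‖ruelleOperator hs htriv ψ‖
      ≤ ‖predecessorIntegral (E := ℝ) hs htriv‖ * ‖ContinuousLinearMap.mul ℝ _ (expWeight ψ)‖ :=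
        ContinuousLinearMap.opNorm_comp_le _ _
    _ ≤ μ.real Set.univ * Real.exp ‖ψ‖ := by
        gcongr
        · exact norm_predecessorIntegral_le hs htriv
        · exact (ContinuousLinearMap.opNorm_mul_apply_le ℝ _ _).trans (norm_expWeight_le ψ)

end Operator

theorem generalized_ruelle_operator_bounded_general [TopologicalSpace M]
    [FirstCountableTopology M] [MeasurableSpace M] [OpensMeasurableSpace M]
    (μ : Measure M) [IsFiniteMeasure μ]
    (hs : ∀ m, MeasurableSet (predecessors A I m)) (htriv : AESectionallyTrivial μ A I)
    (ψ φ : AdmissibleSeq A I →ᵇ ℝ) :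
    Continuous (fun x : AdmissibleSeq A I =>
      ∫ a in predecessors A I (x.1 0), consExtend (fun z => Real.exp (ψ z) * φ z) x a ∂μ) ∧
    (∀ x : AdmissibleSeq A I,
      |∫ a in predecessors A I (x.1 0), consExtend (fun z => Real.exp (ψ z) * φ z) x a ∂μ| ≤
        μ.real Set.univ * Real.exp ‖ψ‖ * ‖φ‖) ∧
    ∃ T : (AdmissibleSeq A I →ᵇ ℝ) →L[ℝ] (AdmissibleSeq A I →ᵇ ℝ),
      ∀ (φ' : AdmissibleSeq A I →ᵇ ℝ) (x : AdmissibleSeq A I),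
        T φ' x =
          ∫ a in predecessors A I (x.1 0), consExtend (fun z => Real.exp (ψ z) * φ' z) x a ∂μ := by
  simp only [← ruelleOperator_apply hs htriv]
  refine ⟨(ruelleOperator hs htriv ψ φ).continuous, fun x => ?_, ruelleOperator hs htriv ψ,
    fun _ _ => rfl⟩
  exact ((ruelleOperator hs htriv ψ φ).norm_coe_le_norm x).trans
    (ContinuousLinearMap.le_of_opNorm_le _ (norm_ruelleOperator_le hs htriv ψ) φ)

end

/-- The generalized Ruelle operator
`(L_ψφ)(x) = ∫_{s(x 0)} e^{ψ(ax)} φ(ax) dμ(a)` on `B(A,I)` (with `A` sectionally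
trivial on `I`) takes continuous functions to continuous functions, satisfies
`‖L_ψφ‖_∞ ≤ μ(M) e^{‖ψ‖_∞} ‖φ‖_∞`, and defines a bounded linear operator on
`C(B(A,I), ℝ)` with the supremum norm. -/
theorem generalized_ruelle_operator_bounded
    {M : Type*} [MetricSpace M] [CompactSpace M] [MeasurableSpace M] [BorelSpace M]
    (μ : Measure M) [IsFiniteMeasure μ]
    (A : M × M → ℝ) (hA : Continuous A) (I : Set ℝ) (hI : IsClosed I)
    (hsec : ∀ m : M, ∃ ε > (0 : ℝ), ∀ m' : M, dist m m' < ε →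
      {a : M | A (a, m') ∈ I} = {a : M | A (a, m) ∈ I})
    [CompactSpace {z : ℕ → M // ∀ k : ℕ, A (z k, z (k + 1)) ∈ I}]
    (ψ φ : C({z : ℕ → M // ∀ k : ℕ, A (z k, z (k + 1)) ∈ I}, ℝ)) :
    Continuous (fun x : {z : ℕ → M // ∀ k : ℕ, A (z k, z (k + 1)) ∈ I} =>
      ∫ a in {a : M | A (a, x.1 0) ∈ I},
        (if ha : A (a, x.1 0) ∈ I then
          Real.exp (ψ (consMem A I x a ha)) * φ (consMem A I x a ha) else 0) ∂μ) ∧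
    (∀ x : {z : ℕ → M // ∀ k : ℕ, A (z k, z (k + 1)) ∈ I},
      |∫ a in {a : M | A (a, x.1 0) ∈ I},
        (if ha : A (a, x.1 0) ∈ I then
          Real.exp (ψ (consMem A I x a ha)) * φ (consMem A I x a ha) else 0) ∂μ| ≤
      (μ Set.univ).toReal * Real.exp ‖ψ‖ * ‖φ‖) ∧
    ∃ T : C({z : ℕ → M // ∀ k : ℕ, A (z k, z (k + 1)) ∈ I}, ℝ) →L[ℝ]
        C({z : ℕ → M // ∀ k : ℕ, A (z k, z (k + 1)) ∈ I}, ℝ),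
      ∀ φ' : C({z : ℕ → M // ∀ k : ℕ, A (z k, z (k + 1)) ∈ I}, ℝ),
        ∀ x : {z : ℕ → M // ∀ k : ℕ, A (z k, z (k + 1)) ∈ I},
          T φ' x = ∫ a in {a : M | A (a, x.1 0) ∈ I},
            (if ha : A (a, x.1 0) ∈ I then
              Real.exp (ψ (consMem A I x a ha)) * φ' (consMem A I x a ha) else 0) ∂μ := by
  obtain ⟨hcont, hbound, T, hT⟩ := generalized_ruelle_operator_bounded_general μ
    (fun m => (isClosed_predecessors hA hI m).measurableSet)
    (aeSectionallyTrivial_of_isLocallyConstant μ (isLocallyConstant_of_dist hsec))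
    (BoundedContinuousFunction.mkOfCompact ψ) (BoundedContinuousFunction.mkOfCompact φ)
  let e := (ContinuousMap.linearIsometryBoundedOfCompact (AdmissibleSeq A I) ℝ ℝ)
    |>.toContinuousLinearEquiv
  exact ⟨hcont, hbound, e.symm.conjContinuousAlgEquiv T, fun φ' => hT (e φ')⟩
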